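/- Let d ≥ 1, γ > 0, and let f : ℝ^d → ℝ be M-Lipschitz continuous. Let f_γ(x) := E[f(x + γ·ẽ)], where ẽ is uniformly distributed on the unit l₁-ball B₁^d(1). Then f_γ is differentiable at every x ∈ ℝ^d with gradient ∇f_γ(x) = E_e[(d/γ)·f(x + γe)·sign(e)], where e is uniformly distributed on the unit l₁-sphere S₁^d(1). -/

import Mathlib

open MeasureTheory
open scoped ENNReal RealInnerProductSpace

noncomputable section

/-- The `l_p` norm on `EuclideanSpace ℝ (Fin d)` (with `p = ∞` giving the sup norm). -/
def lpNorm {d : ℕ} (p : ℝ≥0∞) (x : EuclideanSpace ℝ (Fin d)) : ℝ :=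
  if p = ∞ then ⨆ i, |x i| else (∑ i, |x i| ^ p.toReal) ^ (1 / p.toReal)

/-- The unit `l₁`-ball `B₁^d(1)`. -/
def l1Ball (d : ℕ) : Set (EuclideanSpace ℝ (Fin d)) := {u | ∑ i, |u i| ≤ 1}

/-- The Euclidean unit ball `B₂^d(1)`. -/
def l2Ball (d : ℕ) : Set (EuclideanSpace ℝ (Fin d)) := {u | ‖u‖ ≤ 1}

/-- The unit `l₁`-sphere `S₁^d(1)`. -/
def l1Sphere (d : ℕ) : Set (EuclideanSpace ℝ (Fin d)) := {u | ∑ i, |u i| = 1}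

/-- The Euclidean unit sphere `S₂^d(1)`. -/
def l2Sphere (d : ℕ) : Set (EuclideanSpace ℝ (Fin d)) := {u | ‖u‖ = 1}

/-- Uniform probability distribution on a solid body: normalized Lebesgue measure. -/
def uniformOn {d : ℕ} (S : Set (EuclideanSpace ℝ (Fin d))) :
    Measure (EuclideanSpace ℝ (Fin d)) :=
  (volume S)⁻¹ • volume.restrict S

/-- Uniform probability distribution on a hypersurface: normalized `(d-1)`-dimensional
Hausdorff measure. -/
def uniformOnSphere {d : ℕ} (S : Set (EuclideanSpace ℝ (Fin d))) :
    Measure (EuclideanSpace ℝ (Fin d)) :=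
  (μH[(d : ℝ) - 1] S)⁻¹ • (μH[(d : ℝ) - 1]).restrict S

/-- Coordinatewise sign vector `sign(e)`. -/
def signVec {d : ℕ} (e : EuclideanSpace ℝ (Fin d)) : EuclideanSpace ℝ (Fin d) :=
  (WithLp.equiv 2 (Fin d → ℝ)).symm (fun i => Real.sign (e i))

end

/-!
Slice the `l₁`-ball along the `i`-th axis. Moving `x` in the direction `eᵢ` translates `f` along
every slice, so by the fundamental theorem of calculus the partial derivative of the smoothing is
`γ⁻¹` times the integral over the `l₁`-ball of `ℝⁿ` of the difference of `f` on the upper and lower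
caps `y ↦ (±(1 - ‖y‖₁), y)` of the `l₁`-sphere of `ℝⁿ⁺¹`. On every orthant a cap is the graph of an
affine function with slopes `±1`, so surface measure on it is `√(n + 1)` times the Lebesgue measure
of its shadow; the constant cancels in the uniform distribution, and the difference over the caps
becomes the average of `f` weighted by `sign eᵢ`. The factor `d / γ` comes from
`(n + 1) vol B₁ⁿ⁺¹ = 2 vol B₁ⁿ`. These partial derivatives depend continuously on `x`, so the
smoothing is differentiable.
-/

open Filter
open scoped Topology

section LineDerivatives

variable {E F : Type*} [NormedAddCommGroup E] [NormedSpace ℝ E] [NormedAddCommGroup F]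
  [NormedSpace ℝ F]

theorem hasDerivAt_comp_add_smul {f : E → F} {f' : F} {p v : E} {t : ℝ}
    (hf : HasLineDerivAt ℝ f f' (p + t • v) v) : HasDerivAt (fun s => f (p + s • v)) f' t := by
  have hshift : HasDerivAt (fun s => f (p + t • v + s • v)) f' (t - t) := by
    rw [sub_self]
    exact hf
  refine (hshift.comp_sub_const t t).congr_of_eventuallyEq (.of_forall fun s => ?_)
  dsimp only
  rw [add_assoc, ← add_smul, add_sub_cancel]

theorem isLittleO_sub_smul_of_hasLineDerivAt {α : Type*} {l : Filter α} {f f' : E → F} {x v : E}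
    {p : α → E} {c : α → ℝ} (hp : Tendsto p l (𝓝 x)) (hc : Tendsto c l (𝓝 0))
    (hf : ∀ᶠ y in 𝓝 x, HasLineDerivAt ℝ f (f' y) y v) (hf' : ContinuousAt f' x) :
    (fun a => f (p a + c a • v) - f (p a) - c a • f' x) =o[l] c := by
  refine Asymptotics.isLittleO_iff.2 fun ε hε => ?_
  obtain ⟨δ, hδ, hball⟩ := Metric.eventually_nhds_iff_ball.1
    (hf.and (hf'.eventually (Metric.closedBall_mem_nhds (f' x) hε)))
  have hend : Tendsto (fun a => p a + c a • v) l (𝓝 x) := by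
    simpa using hp.add (hc.smul_const v)
  filter_upwards [hp (Metric.ball_mem_nhds x hδ), hend (Metric.ball_mem_nhds x hδ)] with a hpa hpca
  let line : ℝ → E := fun t => p a + t • v
  have hconvex : Convex ℝ (line ⁻¹' Metric.ball x δ) := by
    have hline : line = (AffineMap.lineMap (p a) (p a + v) : ℝ →ᵃ[ℝ] E) := by
      ext t
      simp [line, AffineMap.lineMap_apply, add_comm]
    rw [hline]
    exact (convex_ball x δ).affine_preimage _
  have hderiv : ∀ t ∈ line ⁻¹' Metric.ball x δ, HasDerivWithinAt (fun t => f (line t) - t • f' x)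
      (f' (line t) - f' x) (line ⁻¹' Metric.ball x δ) t := fun t ht => by
    simpa using ((hasDerivAt_comp_add_smul (hball _ ht).1).fun_sub
      ((hasDerivAt_id t).smul_const (f' x))).hasDerivWithinAt
  simpa [line, sub_right_comm] using hconvex.norm_image_sub_le_of_norm_hasDerivWithin_le hderiv
    (fun t ht => mem_closedBall_iff_norm.1 (hball _ ht).2) (x := 0) (y := c a)
    (by simpa [line] using hpa) hpca

theorem hasFDerivAt_of_hasLineDerivAt_basis {ι : Type*} [Finite ι] (b : Module.Basis ι ℝ E)
    {f : E → F} {f' : E → E →L[ℝ] F} {x : E}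
    (hf : ∀ i, ∀ᶠ y in 𝓝 x, HasLineDerivAt ℝ f (f' y (b i)) y (b i)) (hf' : ContinuousAt f' x) :
    HasFDerivAt f (f' x) x := by
  classical
  have := Fintype.ofFinite ι
  have : FiniteDimensional ℝ E := b.finiteDimensional_of_finite
  let coordL (i : ι) : E →L[ℝ] ℝ := (b.coord i).toContinuousLinearMap
  suffices hpartial : ∀ s : Finset ι, (fun h => f (x + ∑ i ∈ s, coordL i h • b i) - f x -
      f' x (∑ i ∈ s, coordL i h • b i)) =o[𝓝 0] (id : E → E) by
    refine hasFDerivAt_iff_isLittleO_nhds_zero.2 ((hpartial Finset.univ).congr_left fun h => ?_)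
    simp [coordL, b.sum_repr]
  intro s
  induction s using Finset.induction_on with
  | empty => simp
  | insert i s hi ih =>
    have hp : Tendsto (fun h => x + ∑ j ∈ s, coordL j h • b j) (𝓝 0) (𝓝 x) :=
      Continuous.tendsto' (by fun_prop) _ _ (by simp)
    have hc : Tendsto (coordL i) (𝓝 0) (𝓝 0) := (coordL i).continuous.tendsto' _ _ (by simp)
    have hstep := (isLittleO_sub_smul_of_hasLineDerivAt hp hc (hf i)
      (hf'.clm_apply continuousAt_const)).trans_isBigO ((coordL i).isBigO_id _)
    refine (hstep.add ih).congr_left fun h => ?_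
    simp only [Finset.sum_insert hi, map_add, map_smul]
    rw [add_comm (coordL i h • b i), ← add_assoc]
    abel

end LineDerivatives

section ParametricIntegrals

variable {E : Type*} [NormedAddCommGroup E] [NormedSpace ℝ E]

theorem hasDerivAt_setIntegral_of_continuous {X : Type*} [TopologicalSpace X] [T2Space X]
    [SecondCountableTopologyEither X E] [MeasurableSpace X] [OpensMeasurableSpace X]
    {μ : Measure X} [IsFiniteMeasureOnCompacts μ] {K : Set X} (hK : IsCompact K)
    {Φ Φ' : ℝ → X → E} (hΦ : ∀ t, Continuous (Φ t))
    (hΦ' : Continuous ↿Φ') (hderiv : ∀ t y, HasDerivAt (Φ · y) (Φ' t y) t) (t : ℝ) :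
    HasDerivAt (fun t => ∫ y in K, Φ t y ∂μ) (∫ y in K, Φ' t y ∂μ) t := by
  obtain ⟨C, hC⟩ := ((isCompact_closedBall t 1).prod hK).exists_bound_of_continuousOn
    hΦ'.continuousOn
  have : IsFiniteMeasure (μ.restrict K) := isFiniteMeasure_restrict.2 hK.measure_ne_top
  refine (hasDerivAt_integral_of_dominated_loc_of_deriv_le (bound := fun _ => C)
    (Metric.closedBall_mem_nhds t one_pos) ?_ ?_ ?_ ?_ ?_ ?_).2
  · exact .of_forall fun s => (hΦ s).aestronglyMeasurable
  · exact (hΦ t).continuousOn.integrableOn_compact hK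
  · exact (hΦ'.comp (Continuous.prodMk_right t)).aestronglyMeasurable
  · filter_upwards [ae_restrict_mem hK.measurableSet] with y hy s hs
    exact hC (s, y) ⟨hs, hy⟩
  · exact integrable_const C
  · exact .of_forall fun y s _ => hderiv s y

theorem continuous_intervalIntegral_of_continuous {X : Type*} [TopologicalSpace X]
    {φ : X → ℝ → E} {a b : X → ℝ} (hφ : Continuous ↿φ) (ha : Continuous a) (hb : Continuous b) :
    Continuous fun y => ∫ s in a y..b y, φ y s := by
  have hsplit (y : X) : ∫ s in a y..b y, φ y s = (∫ s in 0..b y, φ y s) - ∫ s in 0..a y, φ y s :=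
    (intervalIntegral.integral_interval_sub_left
      ((hφ.comp (Continuous.prodMk_right y)).intervalIntegrable _ _)
      ((hφ.comp (Continuous.prodMk_right y)).intervalIntegrable _ _)).symm
  simp only [hsplit]
  exact (intervalIntegral.continuous_parametric_intervalIntegral_of_continuous hφ hb).sub
    (intervalIntegral.continuous_parametric_intervalIntegral_of_continuous hφ ha)

theorem hasDerivAt_intervalIntegral_comp_add_mul [CompleteSpace E] {φ : ℝ → E}
    (hφ : Continuous φ) {c : ℝ} (hc : c ≠ 0) (a b t : ℝ) :
    HasDerivAt (fun t => ∫ s in a..b, φ (t + c * s))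
      (c⁻¹ • (φ (t + c * b) - φ (t + c * a))) t := by
  have hprim (u : ℝ) : HasDerivAt (fun t => ∫ s in 0..t + u, φ s) (φ (t + u)) t :=
    (hφ.integral_hasStrictDerivAt 0 (t + u)).hasDerivAt.comp_add_const t u
  refine (((hprim (c * b)).sub (hprim (c * a))).const_smul c⁻¹).congr_of_eventuallyEq
    (.of_forall fun r => ?_)
  simp only [intervalIntegral.integral_comp_add_mul _ hc]
  exact congrArg _ (intervalIntegral.integral_interval_sub_left (hφ.intervalIntegrable _ _)
    (hφ.intervalIntegrable _ _)).symm

theorem hasDerivAt_setIntegral_intervalIntegral_comp_add_mul [CompleteSpace E] {X : Type*}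
    [TopologicalSpace X] [T2Space X] [SecondCountableTopologyEither X E] [MeasurableSpace X]
    [OpensMeasurableSpace X] {μ : Measure X} [IsFiniteMeasureOnCompacts μ] {K : Set X}
    (hK : IsCompact K) {φ : X → ℝ → E} {a b : X → ℝ} (hφ : Continuous ↿φ) (ha : Continuous a)
    (hb : Continuous b) {c : ℝ} (hc : c ≠ 0) (t : ℝ) :
    HasDerivAt (fun t => ∫ y in K, (∫ s in a y..b y, φ y (t + c * s)) ∂μ)
      (c⁻¹ • ∫ y in K, (φ y (t + c * b y) - φ y (t + c * a y)) ∂μ) t := by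
  rw [← integral_smul]
  refine hasDerivAt_setIntegral_of_continuous (μ := μ)
    (Φ := fun t y => ∫ s in a y..b y, φ y (t + c * s))
    (Φ' := fun t y => c⁻¹ • (φ y (t + c * b y) - φ y (t + c * a y)))
    hK (fun t => ?_) ?_ (fun t y => ?_) t
  · have hslice : Continuous fun p : X × ℝ => (p.1, t + c * p.2) := by fun_prop
    exact continuous_intervalIntegral_of_continuous (hφ.comp hslice) ha hb
  · have hend {u : X → ℝ} (hu : Continuous u) :
        Continuous fun p : ℝ × X => φ p.2 (p.1 + c * u p.2) :=
      hφ.comp (by fun_prop : Continuous fun p : ℝ × X => (p.2, p.1 + c * u p.2))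
    exact ((hend hb).sub (hend ha)).const_smul c⁻¹
  · exact hasDerivAt_intervalIntegral_comp_add_mul (hφ.comp (Continuous.prodMk_right y)) hc _ _ t

end ParametricIntegrals

section InsertCoord

variable {n : ℕ}

/-- The point of `ℝⁿ⁺¹` with `i`-th coordinate `s` and remaining coordinates `y`: the splitting
`ℝⁿ⁺¹ ≃ ℝ × ℝⁿ` along the `i`-th axis. -/
noncomputable def insertCoord (i : Fin (n + 1)) (s : ℝ) (y : EuclideanSpace ℝ (Fin n)) :
    EuclideanSpace ℝ (Fin (n + 1)) :=
  WithLp.toLp 2 (i.insertNth s y)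

variable (i : Fin (n + 1)) (s t : ℝ) (y z : EuclideanSpace ℝ (Fin n))

@[simp]
theorem insertCoord_apply_same : insertCoord i s y i = s := by
  simp [insertCoord]

@[simp]
theorem insertCoord_apply_succAbove (j : Fin n) : insertCoord i s y (i.succAbove j) = y j := by
  simp [insertCoord]

variable {i} in
theorem euclideanSpace_ext_succAbove {u v : EuclideanSpace ℝ (Fin (n + 1))} (hi : u i = v i)
    (hsucc : ∀ j, u (i.succAbove j) = v (i.succAbove j)) : u = v :=
  PiLp.ext <| (Fin.forall_iff_succAbove i (P := fun j => u j = v j)).2 ⟨hi, hsucc⟩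

theorem insertCoord_injective :
    Function.Injective fun p : ℝ × EuclideanSpace ℝ (Fin n) => insertCoord i p.1 p.2 :=
  fun p q h => Prod.ext (by simpa using congrArg (· i) h)
    (PiLp.ext fun j => by simpa using congrArg (· (i.succAbove j)) h)

theorem insertCoord_self_removeNth (u : EuclideanSpace ℝ (Fin (n + 1))) :
    insertCoord i (u i) (WithLp.toLp 2 (i.removeNth u)) = u :=
  euclideanSpace_ext_succAbove (i := i) (by simp) (by simp [Fin.removeNth])

theorem sum_abs_insertCoord : ∑ j, |insertCoord i s y j| = |s| + ∑ j, |y j| := by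
  simp [Fin.sum_univ_succAbove _ i]

theorem inner_insertCoord : ⟪insertCoord i s y, insertCoord i t z⟫ = s * t + ⟪y, z⟫ := by
  simp [PiLp.inner_apply, Fin.sum_univ_succAbove _ i, mul_comm]

theorem insertCoord_add : insertCoord i (s + t) (y + z) = insertCoord i s y + insertCoord i t z :=
  euclideanSpace_ext_succAbove (i := i) (by simp) (by simp)

theorem insertCoord_smul : insertCoord i (t * s) (t • y) = t • insertCoord i s y :=
  euclideanSpace_ext_succAbove (i := i) (by simp) (by simp)

@[fun_prop]
theorem continuous_insertCoord {X : Type*} [TopologicalSpace X] {σ : X → ℝ}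
    {η : X → EuclideanSpace ℝ (Fin n)} (hσ : Continuous σ) (hη : Continuous η) :
    Continuous fun a => insertCoord i (σ a) (η a) :=
  (PiLp.continuous_toLp 2 _).comp (hσ.finInsertNth i ((PiLp.continuous_ofLp 2 _).comp hη))

theorem measurePreserving_insertCoord :
    MeasurePreserving fun p : ℝ × EuclideanSpace ℝ (Fin n) => insertCoord i p.1 p.2 :=
  ((PiLp.volume_preserving_toLp (Fin (n + 1))).comp
    ((volume_preserving_piFinSuccAbove (fun _ => ℝ) i).symm _)).comp
      ((MeasurePreserving.id volume).prod (PiLp.volume_preserving_ofLp (Fin n)))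

theorem measurableEmbedding_insertCoord :
    MeasurableEmbedding fun p : ℝ × EuclideanSpace ℝ (Fin n) => insertCoord i p.1 p.2 :=
  Continuous.measurableEmbedding (by fun_prop) (insertCoord_injective i)

end InsertCoord

section L1Ball

variable {n : ℕ}

theorem isClosed_l1Ball (n : ℕ) : IsClosed (l1Ball n) :=
  isClosed_le (by fun_prop) continuous_const

theorem isCompact_l1Ball (n : ℕ) : IsCompact (l1Ball n) := by
  refine Metric.isCompact_of_isClosed_isBounded (isClosed_l1Ball n)
    (isBounded_iff_forall_norm_le.2 ⟨1, fun u hu => ?_⟩)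
  calc ‖u‖ ≤ ∑ i, ‖u i‖ := by
        rw [EuclideanSpace.norm_eq]
        exact Real.sqrt_le_iff.2 ⟨by positivity,
          Finset.sum_sq_le_sq_sum_of_nonneg fun i _ => norm_nonneg (u i)⟩
    _ ≤ 1 := hu

theorem insertCoord_mem_l1Ball_iff {i : Fin (n + 1)} {s : ℝ} {y : EuclideanSpace ℝ (Fin n)} :
    insertCoord i s y ∈ l1Ball (n + 1) ↔ |s| ≤ 1 - ∑ j, |y j| := by
  simp only [l1Ball, Set.mem_ofPred_eq, sum_abs_insertCoord, le_sub_iff_add_le]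

theorem volume_sum_abs_lt_one (n : ℕ) :
    volume {u : EuclideanSpace ℝ (Fin n) | ∑ i, |u i| < 1} =
      ENNReal.ofReal (2 ^ n / n.factorial) := by
  have hopen : IsOpen {u : EuclideanSpace ℝ (Fin n) | ∑ i, |u i| < 1} :=
    isOpen_lt (by fun_prop) continuous_const
  rw [← (PiLp.volume_preserving_toLp (Fin n)).measure_preimage hopen.nullMeasurableSet]
  simpa [Set.preimage, Real.Gamma_nat_eq_factorial, one_add_one_eq_two, Real.Gamma_two] using
    volume_sum_rpow_lt_one (Fin n) le_rfl

theorem convex_l1Ball (n : ℕ) : Convex ℝ (l1Ball n) := by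
  intro u hu v hv a b ha hb hab
  calc ∑ i, |a * u i + b * v i| ≤ ∑ i, (a * |u i| + b * |v i|) := Finset.sum_le_sum fun i _ => by
        simpa [abs_mul, abs_of_nonneg, ha, hb] using abs_add_le (a * u i) (b * v i)
    _ = a * ∑ i, |u i| + b * ∑ i, |v i| := by
        rw [Finset.sum_add_distrib, Finset.mul_sum, Finset.mul_sum]
    _ ≤ a * 1 + b * 1 := by gcongr <;> assumption
    _ = 1 := by rw [mul_one, mul_one, hab]

theorem volume_l1Sphere (n : ℕ) : volume (l1Sphere n) = 0 := by
  refine measure_mono_null (fun u hu => ?_) ((convex_l1Ball n).addHaar_frontier volume)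
  refine ⟨subset_closure (le_of_eq hu), fun hint => ?_⟩
  have hscale : Tendsto (fun t : ℝ => t • u) (𝓝[>] 1) (𝓝 u) :=
    (Continuous.tendsto' (by fun_prop) 1 u (one_smul ℝ u)).mono_left nhdsWithin_le_nhds
  obtain ⟨t, hmem, ht⟩ :=
    ((hscale.eventually_mem (mem_interior_iff_mem_nhds.1 hint)).and self_mem_nhdsWithin).exists
  have hle : |t| * ∑ i, |u i| ≤ 1 := by simpa [l1Ball, abs_mul, Finset.mul_sum] using hmem
  rw [show ∑ i, |u i| = 1 from hu, mul_one] at hle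
  exact absurd ((le_abs_self t).trans hle) (not_le.2 ht)

theorem volume_l1Ball (n : ℕ) : volume (l1Ball n) = ENNReal.ofReal (2 ^ n / n.factorial) := by
  have hsplit : l1Ball n = {u | ∑ i, |u i| < 1} ∪ l1Sphere n :=
    Set.ext fun u => le_iff_lt_or_eq (a := ∑ i, |u i|)
  rw [hsplit, measure_congr (union_ae_eq_left_of_ae_eq_empty (ae_eq_empty.2 (volume_l1Sphere n))),
    volume_sum_abs_lt_one]

theorem volume_real_l1Ball_succ (n : ℕ) :
    (n + 1) * volume.real (l1Ball (n + 1)) = 2 * volume.real (l1Ball n) := by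
  simp only [measureReal_def, volume_l1Ball]
  rw [ENNReal.toReal_ofReal (by positivity), ENNReal.toReal_ofReal (by positivity),
    Nat.factorial_succ]
  push_cast
  field_simp
  ring

end L1Ball

section GraphArea

theorem normDet_eq_sqrt_one_add_norm_sq {U V : Type*} [NormedAddCommGroup U]
    [InnerProductSpace ℝ U] [FiniteDimensional ℝ U] [NormedAddCommGroup V] [InnerProductSpace ℝ V]
    {L : U →ₗ[ℝ] V} {a : U} (hL : ∀ y z, ⟪L y, L z⟫ = ⟪a, y⟫ * ⟪a, z⟫ + ⟪y, z⟫) :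
    L.normDet = √(1 + ‖a‖ ^ 2) := by
  let b := stdOrthonormalBasis ℝ U
  have hgram : Matrix.gram ℝ (L <| b ·) =
      1 + Matrix.replicateCol Unit (⟪a, b ·⟫) * Matrix.replicateRow Unit (⟪a, b ·⟫) := by
    ext i j
    simp [hL, b.inner_eq_ite, Matrix.one_apply, Matrix.mul_apply, add_comm]
  have hsq : L.normDet ^ 2 = 1 + ‖a‖ ^ 2 := by
    have hdet := L.normDet_sq_eq_det_gram b
    rw [hgram, Matrix.det_one_add_replicateCol_mul_replicateRow] at hdet
    simpa [dotProduct, ← sq, b.sum_sq_inner_left] using hdet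
  rw [← hsq, Real.sqrt_sq L.normDet_nonneg]

variable {n : ℕ}

/-- The linear map `y ↦ (⟪a, y⟫, y)` whose range is the graph of `⟪a, ·⟫` over the hyperplane
orthogonal to the `i`-th axis. -/
noncomputable def graphMap (i : Fin (n + 1)) (a : EuclideanSpace ℝ (Fin n)) :
    EuclideanSpace ℝ (Fin n) →ₗ[ℝ] EuclideanSpace ℝ (Fin (n + 1)) where
  toFun y := insertCoord i ⟪a, y⟫ y
  map_add' y z := by rw [inner_add_right, insertCoord_add]
  map_smul' t y := by rw [real_inner_smul_right, insertCoord_smul, RingHom.id_apply]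

theorem euclideanHausdorffMeasure_image_affineGraph (i : Fin (n + 1)) (c : ℝ)
    (a : EuclideanSpace ℝ (Fin n)) (A : Set (EuclideanSpace ℝ (Fin n))) :
    μHE[n] ((fun y => insertCoord i (c + ⟪a, y⟫) y) '' A) =
      ENNReal.ofReal √(1 + ‖a‖ ^ 2) * volume A := by
  have htranslate : (fun y => insertCoord i (c + ⟪a, y⟫) y) '' A =
      IsometryEquiv.addLeft (insertCoord i c 0) '' (graphMap i a '' A) := by
    rw [Set.image_image]
    refine Set.image_congr fun y _ => ?_
    simpa [graphMap] using insertCoord_add i c ⟪a, y⟫ 0 y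
  have harea := (graphMap i a).euclideanHausdorffMeasure_image_eq_normDet_mul_volume A
  rw [finrank_euclideanSpace_fin,
    normDet_eq_sqrt_one_add_norm_sq fun y z => inner_insertCoord i ⟪a, y⟫ ⟪a, z⟫ y z] at harea
  rw [htranslate, (IsometryEquiv.isometry _).euclideanHausdorffMeasure_image, harea]

end GraphArea

section L1Sphere

theorem inv_apply_univ_smul_smul {X : Type*} [MeasurableSpace X] {c : ℝ≥0∞} (hc : c ≠ 0)
    (hc' : c ≠ ∞) (μ : Measure X) :
    ((c • μ) Set.univ)⁻¹ • c • μ = (μ Set.univ)⁻¹ • μ := by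
  rw [Measure.smul_apply, smul_eq_mul, ENNReal.mul_inv (.inl hc) (.inl hc'), smul_smul,
    mul_right_comm, ENNReal.inv_mul_cancel hc hc', one_mul]

variable {n : ℕ} (i : Fin (n + 1)) (s : ℝ)

/-- The chart `y ↦ (s (1 - ‖y‖₁), y)`, with `s = ±1` in the `i`-th coordinate. It carries the
`l₁`-ball of `ℝⁿ` onto the part of the `l₁`-sphere of `ℝⁿ⁺¹` where the `i`-th coordinate has
sign `s` or vanishes. -/
noncomputable def l1Chart (y : EuclideanSpace ℝ (Fin n)) : EuclideanSpace ℝ (Fin (n + 1)) :=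
  insertCoord i (s * (1 - ∑ j, |y j|)) y

@[fun_prop]
theorem continuous_l1Chart : Continuous (l1Chart i s) := by
  unfold l1Chart
  fun_prop

theorem l1Chart_injective : Function.Injective (l1Chart i s) := fun _ _ h =>
  (Prod.ext_iff.1 (@insertCoord_injective _ i (_, _) (_, _) h)).2

theorem measurableEmbedding_l1Chart : MeasurableEmbedding (l1Chart i s) :=
  (continuous_l1Chart i s).measurableEmbedding (l1Chart_injective i s)

/-- The closed orthant of `ℝⁿ` with sign pattern `σ`. -/
def closedOrthant (σ : Fin n → ℤˣ) : Set (EuclideanSpace ℝ (Fin n)) :=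
  {y | ∀ j, |y j| = σ j * y j}

theorem iUnion_closedOrthant : ⋃ σ : Fin n → ℤˣ, closedOrthant σ = Set.univ := by
  refine Set.eq_univ_of_forall fun y => Set.mem_iUnion.2
    ⟨fun j => if 0 ≤ y j then 1 else -1, fun j => ?_⟩
  dsimp only
  split_ifs with hj
  · simp [abs_of_nonneg hj]
  · simp [abs_of_neg (not_le.1 hj)]

variable {s}

/-- On a closed orthant the `l₁`-norm is linear, so there the chart is the graph of an affine
function whose gradient has entries `±1`. -/
theorem euclideanHausdorffMeasure_image_l1Chart (hs : |s| = 1) {σ : Fin n → ℤˣ}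
    {A : Set (EuclideanSpace ℝ (Fin n))} (hA : A ⊆ closedOrthant σ) :
    μHE[n] (l1Chart i s '' A) = ENNReal.ofReal √(n + 1) * volume A := by
  let a : EuclideanSpace ℝ (Fin n) := WithLp.toLp 2 fun j => -(s * σ j)
  have hσ (j : Fin n) : |((σ j : ℤ) : ℝ)| = 1 := by
    rcases Int.units_eq_one_or (σ j) with h | h <;> simp [h]
  have hnorm : ‖a‖ ^ 2 = n := by
    simp [EuclideanSpace.norm_sq_eq, a, hs, hσ]
  have hgraph : Set.EqOn (l1Chart i s) (fun y => insertCoord i (s + ⟪a, y⟫) y) A := fun y hy => by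
    have hinner : ⟪a, y⟫ = -(s * ∑ j, |y j|) := by
      simp [hA hy _, a, PiLp.inner_apply, Finset.mul_sum, mul_assoc, mul_comm (y _)]
    simp only [l1Chart, hinner, mul_one_sub, ← sub_eq_add_neg]
  rw [hgraph.image_eq, euclideanHausdorffMeasure_image_affineGraph, hnorm, add_comm]

theorem comap_l1Chart_euclideanHausdorffMeasure (hs : |s| = 1) :
    Measure.comap (l1Chart i s) μHE[n] = ENNReal.ofReal √(n + 1) • volume := by
  refine Measure.ext_of_iUnion_eq_univ iUnion_closedOrthant fun σ => Measure.ext fun A hA => ?_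
  rw [Measure.restrict_apply hA, Measure.restrict_apply hA,
    (measurableEmbedding_l1Chart i s).comap_apply,
    euclideanHausdorffMeasure_image_l1Chart i hs Set.inter_subset_right]
  rfl

theorem restrict_image_l1Chart_euclideanHausdorffMeasure (hs : |s| = 1)
    (A : Set (EuclideanSpace ℝ (Fin n))) :
    (μHE[n]).restrict (l1Chart i s '' A) =
      ENNReal.ofReal √(n + 1) • (volume.restrict A).map (l1Chart i s) := by
  have hchart := measurableEmbedding_l1Chart i s
  rw [← Measure.map_smul, ← Measure.restrict_smul,
    ← comap_l1Chart_euclideanHausdorffMeasure i hs]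
  conv_rhs => rw [← Set.preimage_image_eq A (l1Chart_injective i s)]
  rw [← hchart.restrict_map, hchart.map_comap, Measure.restrict_restrict_of_subset
    (Set.image_subset_range _ _)]

theorem l1Chart_mem_l1Sphere {y : EuclideanSpace ℝ (Fin n)} (hs : |s| = 1) (hy : y ∈ l1Ball n) :
    l1Chart i s y ∈ l1Sphere (n + 1) := by
  have hr : abs (1 - ∑ j, |y j|) = 1 - ∑ j, |y j| := abs_of_nonneg (sub_nonneg.2 hy)
  simp [l1Sphere, l1Chart, sum_abs_insertCoord, abs_mul, hs, hr]

theorem image_l1Chart_union : l1Chart i 1 '' l1Ball n ∪ l1Chart i (-1) '' l1Ball n =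
    l1Sphere (n + 1) := by
  refine Set.Subset.antisymm (Set.union_subset ?_ ?_) fun u hu => ?_
  · exact Set.image_subset_iff.2 fun y => l1Chart_mem_l1Sphere i (by simp)
  · exact Set.image_subset_iff.2 fun y => l1Chart_mem_l1Sphere i (by simp)
  let y : EuclideanSpace ℝ (Fin n) := WithLp.toLp 2 (i.removeNth u)
  have huy : insertCoord i (u i) y = u := insertCoord_self_removeNth i u
  have hsum : |u i| + ∑ j, |y j| = 1 := by rw [← sum_abs_insertCoord, huy]; exact hu
  have hy : y ∈ l1Ball n := by
    change ∑ j, |y j| ≤ 1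
    linarith [abs_nonneg (u i)]
  have habs : 1 - ∑ j, |y j| = |u i| := by linarith
  rcases abs_choice (u i) with hpos | hneg
  · exact .inl ⟨y, hy, by rw [l1Chart, habs, one_mul, hpos, huy]⟩
  · exact .inr ⟨y, hy, by rw [l1Chart, habs, hneg, neg_one_mul, neg_neg, huy]⟩

theorem aedisjoint_image_l1Chart :
    AEDisjoint μHE[n] (l1Chart i 1 '' l1Ball n) (l1Chart i (-1) '' l1Ball n) := by
  have hsub : l1Chart i 1 '' l1Ball n ∩ l1Chart i (-1) '' l1Ball n ⊆ l1Chart i 1 '' l1Sphere n := by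
    rintro _ ⟨⟨y, -, rfl⟩, ⟨z, -, hz⟩⟩
    obtain ⟨hcoord, rfl⟩ := Prod.ext_iff.1 (@insertCoord_injective _ i (_, _) (_, _) hz)
    refine ⟨z, ?_, rfl⟩
    change ∑ j, |z j| = 1
    dsimp only at hcoord
    linarith
  refine measure_mono_null hsub ?_
  rw [← (measurableEmbedding_l1Chart i 1).comap_apply,
    comap_l1Chart_euclideanHausdorffMeasure i abs_one, Measure.smul_apply, volume_l1Sphere,
    smul_zero]

theorem restrict_l1Sphere_euclideanHausdorffMeasure :
    (μHE[n]).restrict (l1Sphere (n + 1)) = ENNReal.ofReal √(n + 1) •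
      ((volume.restrict (l1Ball n)).map (l1Chart i 1) +
        (volume.restrict (l1Ball n)).map (l1Chart i (-1))) := by
  have hmeas : MeasurableSet (l1Chart i (-1) '' l1Ball n) :=
    (measurableEmbedding_l1Chart i (-1)).measurableSet_image.2 (isClosed_l1Ball n).measurableSet
  rw [← image_l1Chart_union i,
    Measure.restrict_union₀ (aedisjoint_image_l1Chart i) hmeas.nullMeasurableSet,
    restrict_image_l1Chart_euclideanHausdorffMeasure i abs_one,
    restrict_image_l1Chart_euclideanHausdorffMeasure i (by simp), smul_add]

theorem uniformOnSphere_eq_euclideanHausdorffMeasure (S : Set (EuclideanSpace ℝ (Fin (n + 1)))) :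
    uniformOnSphere S = ((μHE[n]).restrict S Set.univ)⁻¹ • (μHE[n]).restrict S := by
  have hfactor := Measure.addHaarScalarFactor_volume_hausdorffMeasure_ne_zero n
  rw [Measure.euclideanHausdorffMeasure_def, Measure.restrict_smul, ENNReal.smul_def,
    inv_apply_univ_smul_smul (ENNReal.coe_ne_zero.2 hfactor) ENNReal.coe_ne_top,
    Measure.restrict_apply_univ, uniformOnSphere, Nat.cast_succ, add_sub_cancel_right]

theorem uniformOnSphere_l1Sphere : uniformOnSphere (l1Sphere (n + 1)) =
    (2 * volume (l1Ball n))⁻¹ • ((volume.restrict (l1Ball n)).map (l1Chart i 1) +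
      (volume.restrict (l1Ball n)).map (l1Chart i (-1))) := by
  have hmap (s : ℝ) : (volume.restrict (l1Ball n)).map (l1Chart i s) Set.univ =
      volume (l1Ball n) := by
    rw [Measure.map_apply (continuous_l1Chart i s).measurable .univ, Set.preimage_univ,
      Measure.restrict_apply_univ]
  rw [uniformOnSphere_eq_euclideanHausdorffMeasure,
    restrict_l1Sphere_euclideanHausdorffMeasure i, inv_apply_univ_smul_smul
      (by simpa using by positivity) ENNReal.ofReal_ne_top, Measure.add_apply, hmap, hmap, two_mul]

end L1Sphere

section SphereIntegrals

variable {n : ℕ} (i : Fin (n + 1)) {s : ℝ}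

theorem ae_sign_l1Chart (hs : |s| = 1) :
    ∀ᵐ y ∂volume.restrict (l1Ball n), Real.sign (l1Chart i s y i) = s := by
  filter_upwards [ae_restrict_mem (isClosed_l1Ball n).measurableSet,
    ae_restrict_of_ae (measure_eq_zero_iff_ae_notMem.1 (volume_l1Sphere n))] with y hball hsphere
  have hr : 0 < 1 - ∑ j, |y j| := sub_pos.2 (lt_of_le_of_ne hball hsphere)
  rw [l1Chart, insertCoord_apply_same]
  rcases eq_or_eq_neg_of_abs_eq hs with rfl | rfl
  · rw [one_mul, Real.sign_of_pos hr]
  · rw [neg_one_mul, Real.sign_of_neg (neg_neg_of_pos hr)]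

theorem sign_mul_ae_eq_map_l1Chart (hs : |s| = 1) (φ : EuclideanSpace ℝ (Fin (n + 1)) → ℝ) :
    (fun e => Real.sign (e i) * φ e) =ᵐ[(volume.restrict (l1Ball n)).map (l1Chart i s)]
      fun e => s * φ e := by
  refine (measurableEmbedding_l1Chart i s).ae_map_iff.2 ?_
  filter_upwards [ae_sign_l1Chart i hs] with y hy
  rw [hy]

variable {φ : EuclideanSpace ℝ (Fin (n + 1)) → ℝ}

theorem integrable_sign_mul_map_l1Chart (hφ : Continuous φ) (hs : |s| = 1) :
    Integrable (fun e => Real.sign (e i) * φ e)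
      ((volume.restrict (l1Ball n)).map (l1Chart i s)) := by
  refine (Integrable.const_mul ?_ s).congr (sign_mul_ae_eq_map_l1Chart i hs φ).symm
  exact (measurableEmbedding_l1Chart i s).integrable_map_iff.2
    ((hφ.comp (continuous_l1Chart i s)).continuousOn.integrableOn_compact (isCompact_l1Ball n))

theorem integral_sign_mul_map_l1Chart (hs : |s| = 1) :
    ∫ e, Real.sign (e i) * φ e ∂(volume.restrict (l1Ball n)).map (l1Chart i s) =
      s * ∫ y in l1Ball n, φ (l1Chart i s y) := by
  rw [integral_congr_ae (sign_mul_ae_eq_map_l1Chart i hs φ), integral_const_mul,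
    (measurableEmbedding_l1Chart i s).integral_map]

theorem integrable_sign_mul_uniformOnSphere (hφ : Continuous φ) :
    Integrable (fun e => Real.sign (e i) * φ e) (uniformOnSphere (l1Sphere (n + 1))) := by
  rw [uniformOnSphere_l1Sphere i]
  refine ((integrable_sign_mul_map_l1Chart i hφ abs_one).add_measure
    (integrable_sign_mul_map_l1Chart i hφ (by simp))).smul_measure (ENNReal.inv_ne_top.2 ?_)
  rw [volume_l1Ball]
  simpa using by positivity

theorem integral_sign_mul_uniformOnSphere (hφ : Continuous φ) :
    ∫ e, Real.sign (e i) * φ e ∂uniformOnSphere (l1Sphere (n + 1)) =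
      (2 * volume.real (l1Ball n))⁻¹ *
        ∫ y in l1Ball n, (φ (l1Chart i 1 y) - φ (l1Chart i (-1) y)) := by
  have hint (s : ℝ) : IntegrableOn (fun y => φ (l1Chart i s y)) (l1Ball n) :=
    (hφ.comp (continuous_l1Chart i s)).continuousOn.integrableOn_compact (isCompact_l1Ball n)
  rw [uniformOnSphere_l1Sphere i, integral_smul_measure,
    integral_add_measure (integrable_sign_mul_map_l1Chart i hφ abs_one)
      (integrable_sign_mul_map_l1Chart i hφ (by simp)),
    integral_sign_mul_map_l1Chart i abs_one, integral_sign_mul_map_l1Chart i (by simp),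
    integral_sub (hint 1) (hint (-1)), one_mul, neg_one_mul, ← sub_eq_add_neg, smul_eq_mul,
    ENNReal.toReal_inv, ENNReal.toReal_mul, ENNReal.toReal_ofNat, measureReal_def]

end SphereIntegrals

section Smoothing

variable {n : ℕ} (i : Fin (n + 1)) {F : Type*} [NormedAddCommGroup F] [NormedSpace ℝ F]

theorem integral_indicator_l1Ball_insertCoord (h : EuclideanSpace ℝ (Fin (n + 1)) → F)
    (y : EuclideanSpace ℝ (Fin n)) :
    ∫ s, (l1Ball (n + 1)).indicator h (insertCoord i s y) = (l1Ball n).indicator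
      (fun y => ∫ s in -(1 - ∑ j, |y j|)..1 - ∑ j, |y j|, h (insertCoord i s y)) y := by
  have hpre : (insertCoord i · y) ⁻¹' l1Ball (n + 1) =
      Set.Icc (-(1 - ∑ j, |y j|)) (1 - ∑ j, |y j|) :=
    Set.ext fun s => insertCoord_mem_l1Ball_iff.trans abs_le
  change ∫ s, ((insertCoord i · y) ⁻¹' l1Ball (n + 1)).indicator (h <| insertCoord i · y) s = _
  rw [hpre, integral_indicator measurableSet_Icc]
  by_cases hy : y ∈ l1Ball n
  · have hr : 0 ≤ 1 - ∑ j, |y j| := sub_nonneg.2 hy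
    rw [Set.indicator_of_mem hy, integral_Icc_eq_integral_Ioc,
      intervalIntegral.integral_of_le (by linarith)]
  · have hr : 1 - ∑ j, |y j| < 0 := sub_neg.2 (not_le.1 hy)
    rw [Set.indicator_of_notMem hy, Set.Icc_eq_empty (by linarith), setIntegral_empty]

theorem setIntegral_l1Ball_succ {h : EuclideanSpace ℝ (Fin (n + 1)) → F}
    (hh : IntegrableOn h (l1Ball (n + 1))) :
    ∫ u in l1Ball (n + 1), h u = ∫ y in l1Ball n,
      ∫ s in -(1 - ∑ j, |y j|)..1 - ∑ j, |y j|, h (insertCoord i s y) := by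
  have hball := (isClosed_l1Ball (n + 1)).measurableSet
  have hpres := measurePreserving_insertCoord i
  have hemb := measurableEmbedding_insertCoord i
  have hint := (hpres.integrable_comp_emb hemb).2 (hh.integrable_indicator hball)
  calc ∫ u in l1Ball (n + 1), h u
      = ∫ p : ℝ × EuclideanSpace ℝ (Fin n),
          (l1Ball (n + 1)).indicator h (insertCoord i p.1 p.2) := by
        rw [hpres.integral_comp hemb, integral_indicator hball]
    _ = ∫ y, ∫ s, (l1Ball (n + 1)).indicator h (insertCoord i s y) := integral_prod_symm _ hint
    _ = ∫ y in l1Ball n, ∫ s in -(1 - ∑ j, |y j|)..1 - ∑ j, |y j|, h (insertCoord i s y) := by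
        simp only [integral_indicator_l1Ball_insertCoord,
          integral_indicator (isClosed_l1Ball n).measurableSet]

theorem insertCoord_eq_add_smul_single (s : ℝ) (y : EuclideanSpace ℝ (Fin n)) :
    insertCoord i s y = insertCoord i 0 y + s • EuclideanSpace.single i 1 :=
  euclideanSpace_ext_succAbove (i := i) (by simp) (by simp)

theorem hasLineDerivAt_setIntegral_l1Ball [CompleteSpace F]
    {f : EuclideanSpace ℝ (Fin (n + 1)) → F} (hf : Continuous f) {γ : ℝ} (hγ : γ ≠ 0)
    (x : EuclideanSpace ℝ (Fin (n + 1))) :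
    HasLineDerivAt ℝ (fun x => ∫ u in l1Ball (n + 1), f (x + γ • u))
      (γ⁻¹ • ∫ y in l1Ball n, (f (x + γ • l1Chart i 1 y) - f (x + γ • l1Chart i (-1) y)))
      x (EuclideanSpace.single i 1) := by
  let φ (y : EuclideanSpace ℝ (Fin n)) (t : ℝ) : F :=
    f (x + γ • insertCoord i 0 y + t • EuclideanSpace.single i 1)
  let r (y : EuclideanSpace ℝ (Fin n)) : ℝ := 1 - ∑ j, |y j|
  have hφ : Continuous ↿φ := by
    simp only [φ, Function.HasUncurry.uncurry]
    fun_prop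
  have hr : Continuous r := by fun_prop
  have hshift (t s : ℝ) (y : EuclideanSpace ℝ (Fin n)) :
      f (x + t • EuclideanSpace.single i 1 + γ • insertCoord i s y) = φ y (t + γ * s) := by
    refine congrArg f ?_
    rw [insertCoord_eq_add_smul_single]
    module
  have hchart (s : ℝ) (y : EuclideanSpace ℝ (Fin n)) :
      f (x + γ • l1Chart i s y) = φ y (0 + γ * (s * r y)) := by
    rw [← hshift, zero_smul, add_zero, l1Chart]
  have hderiv := hasDerivAt_setIntegral_intervalIntegral_comp_add_mul (isCompact_l1Ball n)
    (μ := volume) hφ hr.neg hr hγ 0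
  refine (hderiv.congr_deriv ?_).congr_of_eventuallyEq (.of_forall fun t => ?_)
  · simp only [hchart, one_mul, neg_one_mul, Pi.neg_apply]
  · have hint : IntegrableOn (fun u => f (x + t • EuclideanSpace.single i 1 + γ • u))
        (l1Ball (n + 1)) :=
      (by fun_prop : Continuous _).continuousOn.integrableOn_compact (isCompact_l1Ball (n + 1))
    simp only [setIntegral_l1Ball_succ i hint, hshift]
    rfl

end Smoothing

section Gradient

/-- The vector field `x ↦ E_e[(d/γ) f(x + γ e) sign(e)]`, with `e` uniform on the unit `l₁`-sphere:
the candidate for the gradient of the `l₁`-smoothing of `f`. -/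
noncomputable def l1SphereGradient {d : ℕ} (γ : ℝ) (f : EuclideanSpace ℝ (Fin d) → ℝ)
    (x : EuclideanSpace ℝ (Fin d)) : EuclideanSpace ℝ (Fin d) :=
  ∫ e, (d / γ * f (x + γ • e)) • signVec e ∂uniformOnSphere (l1Sphere d)

variable {n : ℕ} {γ : ℝ} {f : EuclideanSpace ℝ (Fin (n + 1)) → ℝ}

theorem l1SphereGradient_apply (hf : Continuous f) (x : EuclideanSpace ℝ (Fin (n + 1)))
    (i : Fin (n + 1)) :
    l1SphereGradient γ f x i = (volume.real (l1Ball (n + 1)))⁻¹ *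
      (γ⁻¹ * ∫ y in l1Ball n, (f (x + γ • l1Chart i 1 y) - f (x + γ • l1Chart i (-1) y))) := by
  set c : ℝ := (n + 1 : ℕ) / γ with hc
  have hcoord (e : EuclideanSpace ℝ (Fin (n + 1))) (j : Fin (n + 1)) :
      ((c * f (x + γ • e)) • signVec e) j = Real.sign (e j) * (c * f (x + γ • e)) :=
    mul_comm _ _
  have hcont : Continuous fun e => c * f (x + γ • e) := by fun_prop
  have hratio : c * (2 * volume.real (l1Ball n))⁻¹ = (volume.real (l1Ball (n + 1)))⁻¹ * γ⁻¹ := by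
    rw [← volume_real_l1Ball_succ, mul_inv]
    push_cast [hc]
    field_simp
  rw [l1SphereGradient, ← hc, eval_integral_piLp fun j => ?_]
  · simp only [hcoord]
    rw [integral_sign_mul_uniformOnSphere i hcont]
    simp only [← mul_sub]
    rw [integral_const_mul, ← mul_assoc, mul_comm _ c, hratio, mul_assoc]
  · simpa only [hcoord] using integrable_sign_mul_uniformOnSphere j hcont

theorem continuous_l1SphereGradient (hf : Continuous f) : Continuous (l1SphereGradient γ f) := by
  have hcoord (i : Fin (n + 1)) : Continuous fun x => l1SphereGradient γ f x i := by
    simp only [l1SphereGradient_apply hf]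
    refine continuous_const.mul (continuous_const.mul ?_)
    exact continuous_parametric_integral_of_continuous (by unfold Function.uncurry; fun_prop)
      (isCompact_l1Ball n)
  exact (PiLp.continuous_toLp 2 _).comp (continuous_pi hcoord)

theorem hasLineDerivAt_integral_uniformOn_l1Ball (hf : Continuous f) (hγ : γ ≠ 0) (i : Fin (n + 1))
    (x : EuclideanSpace ℝ (Fin (n + 1))) :
    HasLineDerivAt ℝ (fun x => ∫ e, f (x + γ • e) ∂uniformOn (l1Ball (n + 1)))
      (l1SphereGradient γ f x i) x (EuclideanSpace.single i 1) := by
  have haverage (x : EuclideanSpace ℝ (Fin (n + 1))) :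
      ∫ e, f (x + γ • e) ∂uniformOn (l1Ball (n + 1)) =
        (volume.real (l1Ball (n + 1)))⁻¹ * ∫ e in l1Ball (n + 1), f (x + γ • e) := by
    rw [uniformOn, integral_smul_measure, ENNReal.toReal_inv, smul_eq_mul, measureReal_def]
  simp only [haverage, l1SphereGradient_apply hf]
  exact HasDerivAt.const_mul _ (hasLineDerivAt_setIntegral_l1Ball i hf hγ x)

end Gradient

theorem l1_smoothing_gradient_formula_general {d : ℕ} (hd : 1 ≤ d) {γ : ℝ} (hγ : γ ≠ 0)
    {f : EuclideanSpace ℝ (Fin d) → ℝ} (hf : Continuous f) (x : EuclideanSpace ℝ (Fin d)) :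
    HasGradientAt (fun x => ∫ e, f (x + γ • e) ∂uniformOn (l1Ball d))
      (∫ e, (d / γ * f (x + γ • e)) • signVec e ∂uniformOnSphere (l1Sphere d)) x := by
  obtain ⟨n, rfl⟩ := Nat.exists_eq_add_of_le' hd
  let dual := InnerProductSpace.toDual ℝ (EuclideanSpace ℝ (Fin (n + 1)))
  refine hasFDerivAt_of_hasLineDerivAt_basis (EuclideanSpace.basisFun (Fin (n + 1)) ℝ).toBasis
    (f' := fun y => dual (l1SphereGradient γ f y)) (fun i => .of_forall fun y => ?_) ?_
  · simpa [dual, EuclideanSpace.inner_single_right] using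
      hasLineDerivAt_integral_uniformOn_l1Ball hf hγ i y
  · exact (dual.continuous.comp (continuous_l1SphereGradient hf)).continuousAt

/-- The `l₁`-ball smoothing `f_γ` of an `M`-Lipschitz function `f` is
differentiable, with gradient `∇f_γ(x) = E_e[(d/γ)·f(x+γe)·sign(e)]`, `e` uniform on the
unit `l₁`-sphere. -/
theorem l1_smoothing_gradient_formula {d : ℕ} (hd : 1 ≤ d) (γ M : ℝ) (hγ : 0 < γ)
    (f fγ : EuclideanSpace ℝ (Fin d) → ℝ)
    (hlip : ∀ x y : EuclideanSpace ℝ (Fin d), |f y - f x| ≤ M * ‖y - x‖)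
    (hfγ : ∀ x, fγ x = ∫ e, f (x + γ • e) ∂(uniformOn (l1Ball d)))
    (x : EuclideanSpace ℝ (Fin d)) :
    HasGradientAt fγ
      (∫ e, (d / γ * f (x + γ • e)) • signVec e ∂(uniformOnSphere (l1Sphere d))) x := by
  obtain rfl := funext hfγ
  exact l1_smoothing_gradient_formula_general hd hγ.ne'
    (LipschitzWith.of_dist_le' fun a b => by
      simpa [Real.dist_eq, dist_eq_norm] using hlip b a).continuous x
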